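/- There exists a constant C > 0 such that for every k ∈ ℤ²∖{0} and every a ≥ 0: Σ_{j₁, j₂ ∈ ℤ²∖{0}, j₁ + j₂ = k} 1/( |j₂| · (|j₁|² + |j₂|² + a²) ) ≤ C / √(|k|² + a²). (In the paper this is used with a² = |k_{2:n}|², yielding that the sum is bounded by C/|k_{1:n}|.) -/

import Mathlib

open scoped Classical

noncomputable section

namespace SBE

/-- Squared Euclidean norm of a point of `ℤ²`. -/
def nsq (k : Fin 2 → ℤ) : ℝ := ∑ i, ((k i : ℝ))^2

def N (k j : Fin 2 → ℤ) : ℕ := max ((k - j) 0).natAbs ((k - j) 1).natAbs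

def h (R : ℝ) (n : ℕ) : ℝ := 4 / (n * (R ^ 2 + (n : ℝ) ^ 2))

lemma h_nonneg (R : ℝ) (n : ℕ) : 0 ≤ h R n := by unfold h; positivity

lemma card_fiber (k : Fin 2 → ℤ) (s : Finset (Fin 2 → ℤ)) (n : ℕ) (hn : n ≠ 0) :
    (s.filter (fun j => N k j = n)).card ≤ 8 * n := by
  rw [← Int.card_box hn]
  apply Finset.card_le_card_of_injOn (fun j => ((k - j) 0, (k - j) 1))
  · intro j hj
    have hj2 := (Finset.mem_filter.mp (Finset.mem_coe.mp hj)).2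
    exact Finset.mem_coe.mpr (Int.mem_box.mpr hj2)
  · intro x _ y _ hxy
    simp only [Prod.mk.injEq, Pi.sub_apply] at hxy
    ext i
    fin_cases i
    · have := hxy.1
      simp; omega
    · have := hxy.2
      simp; omega

lemma step (R : ℝ) (hR : 0 < R) (n : ℕ) :
    (8 * ((n + 1 : ℕ) : ℝ)) * h R (n + 1) ≤ 64 * (1 / (R + n)) - 64 * (1 / (R + (n + 1 : ℕ))) := by
  have hn : (0 : ℝ) ≤ n := n.cast_nonneg
  unfold h
  push_cast
  have e1 : (8 * ((n : ℝ) + 1)) * (4 / ((n + 1) * (R ^ 2 + ((n : ℝ) + 1) ^ 2)))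
      = 32 / (R ^ 2 + ((n : ℝ) + 1) ^ 2) := by
    field_simp; norm_num
  have e2 : 64 * (1 / (R + n)) - 64 * (1 / (R + ((n : ℝ) + 1))) =
      64 / ((R + n) * (R + (n + 1))) := by
    field_simp; ring
  rw [e1, e2, div_le_div_iff₀ (by positivity) (by positivity)]
  nlinarith [sq_nonneg (R - (n + 1))]

lemma sum_h (k : Fin 2 → ℤ) (R : ℝ) (hR : 0 < R) (s : Finset (Fin 2 → ℤ)) :
    ∑ j ∈ s, h R (N k j) ≤ 64 / R := by
  obtain ⟨M, hM⟩ : ∃ M : ℕ, ∀ j ∈ s, N k j < M + 1 :=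
    ⟨s.sup (N k), fun j hj => Nat.lt_succ_of_le (Finset.le_sup hj)⟩
  rw [← Finset.sum_fiberwise_of_maps_to (t := Finset.range (M + 1)) (g := N k)
    (fun j hj => Finset.mem_range.mpr (hM j hj))]
  have key : ∀ n ∈ Finset.range (M + 1),
      ∑ j ∈ s with N k j = n, h R (N k j) ≤ 8 * (n : ℝ) * h R n := by
    intro n _
    have : ∑ j ∈ s with N k j = n, h R (N k j) = ∑ j ∈ s with N k j = n, h R n :=
      Finset.sum_congr rfl (fun j hj => by rw [(Finset.mem_filter.mp hj).2])
    rw [this, Finset.sum_const, nsmul_eq_mul]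
    by_cases hn : n = 0
    · subst hn; simp [h]
    · apply mul_le_mul_of_nonneg_right _ (h_nonneg R n)
      exact_mod_cast card_fiber k s n hn
  refine (Finset.sum_le_sum key).trans ?_
  rw [Finset.sum_range_succ']
  have := Finset.sum_le_sum (fun n (_ : n ∈ Finset.range M) => step R hR n)
  rw [Finset.sum_range_sub' (fun n : ℕ => 64 * (1 / (R + n)))] at this
  have h3 : 0 ≤ 64 * (1 / (R + M)) := by positivity
  have h4 : 64 * (1 / (R + ((0 : ℕ) : ℝ))) = 64 / R := by simp [div_eq_mul_inv]
  simp only [Nat.cast_zero, mul_zero, zero_mul, add_zero] at *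
  linarith

lemma term_le (k j : Fin 2 → ℤ) (hk : k - j ≠ 0) (a : ℝ) :
    1 / (Real.sqrt (nsq (k - j)) * (nsq j + nsq (k - j) + a^2)) ≤
      h (Real.sqrt (nsq k + a ^ 2)) (N k j) := by
  have nn : ∀ v, 0 ≤ nsq v := fun v => Finset.sum_nonneg (fun i _ => sq_nonneg _)
  have hN0 : 0 < N k j := by
    rw [Nat.pos_iff_ne_zero]
    intro h0
    apply hk
    have h1 : max ((k - j) 0).natAbs ((k - j) 1).natAbs = 0 := h0
    ext i
    fin_cases i
    · simp only [Fin.zero_eta, Pi.zero_apply]; omega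
    · simp only [Fin.mk_one, Pi.zero_apply]; omega
  have hN1 : (0 : ℝ) < N k j := by exact_mod_cast hN0
  have hN2 : (N k j : ℝ) ^ 2 ≤ nsq (k - j) := by
    simp only [nsq, Fin.sum_univ_two, N]
    rcases max_choice ((k - j) 0).natAbs ((k - j) 1).natAbs with h | h <;> rw [h] <;>
      rw [Nat.cast_natAbs, Int.cast_abs, sq_abs]
    · nlinarith [sq_nonneg (((k - j) 1 : ℤ) : ℝ)]
    · nlinarith [sq_nonneg (((k - j) 0 : ℤ) : ℝ)]
  have hpar : nsq k ≤ 2 * (nsq j + nsq (k - j)) := by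
    simp only [nsq, Fin.sum_univ_two, Pi.sub_apply, Int.cast_sub]
    nlinarith [sq_nonneg ((k 0 : ℝ) - 2 * j 0), sq_nonneg ((k 1 : ℝ) - 2 * j 1)]
  unfold h
  rw [Real.sq_sqrt (by have := nn k; positivity)]
  have hs : (N k j : ℝ) ≤ Real.sqrt (nsq (k - j)) := Real.le_sqrt_of_sq_le hN2
  have e : 4 / ((N k j : ℝ) * (nsq k + a ^ 2 + (N k j : ℝ) ^ 2)) =
      1 / ((N k j : ℝ) * ((nsq k + a ^ 2 + (N k j : ℝ) ^ 2) / 4)) := by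
    have := nn k
    field_simp
  rw [e]
  have := nn k
  have := nn j
  apply one_div_le_one_div_of_le (by positivity)
  apply mul_le_mul hs _ (by positivity) (by positivity)
  nlinarith [sq_nonneg a]

/-- There is `C > 0` such that for every `k ∈ ℤ² \ {0}` and every
`a ≥ 0`, `Σ_{j₁+j₂=k, j₁,j₂ ≠ 0} 1/(|j₂|(|j₁|²+|j₂|²+a²)) ≤ C/√(|k|²+a²)`
(the sum being over `j₁`, with `j₂ = k − j₁`). -/
theorem stmt7 :
    ∃ C : ℝ, 0 < C ∧ ∀ k : Fin 2 → ℤ, k ≠ 0 → ∀ a : ℝ, 0 ≤ a →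
      Summable (fun j : Fin 2 → ℤ =>
        if j ≠ 0 ∧ k - j ≠ 0 then
          1 / (Real.sqrt (nsq (k - j)) * (nsq j + nsq (k - j) + a^2)) else 0) ∧
      (∑' j : Fin 2 → ℤ,
        if j ≠ 0 ∧ k - j ≠ 0 then
          1 / (Real.sqrt (nsq (k - j)) * (nsq j + nsq (k - j) + a^2)) else 0)
        ≤ C / Real.sqrt (nsq k + a^2) := by
  refine ⟨64, by norm_num, fun k hk a _ => ?_⟩
  have nn : ∀ v, 0 ≤ nsq v := fun v => Finset.sum_nonneg (fun i _ => sq_nonneg _)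
  have hkpos : 0 < nsq k := by
    obtain ⟨i, hi⟩ := Function.ne_iff.mp hk
    have hi' : (k i : ℝ) ≠ 0 := by exact_mod_cast hi
    exact Finset.sum_pos' (fun i _ => sq_nonneg _) ⟨i, Finset.mem_univ i, by positivity⟩
  have hR : 0 < Real.sqrt (nsq k + a ^ 2) := Real.sqrt_pos.mpr (by positivity)
  set f : (Fin 2 → ℤ) → ℝ := fun j =>
        if j ≠ 0 ∧ k - j ≠ 0 then
          1 / (Real.sqrt (nsq (k - j)) * (nsq j + nsq (k - j) + a^2)) else 0 with hf
  have f0 : ∀ j, 0 ≤ f j := by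
    intro j
    have := nn j
    have := nn (k - j)
    simp only [hf]
    split_ifs <;> positivity
  have fle : ∀ j, f j ≤ h (Real.sqrt (nsq k + a ^ 2)) (N k j) := by
    intro j
    simp only [hf]
    split_ifs with hc
    · exact term_le k j hc.2 a
    · exact h_nonneg _ _
  have hsum : ∀ s : Finset (Fin 2 → ℤ), ∑ j ∈ s, f j ≤ 64 / Real.sqrt (nsq k + a ^ 2) :=
    fun s => (Finset.sum_le_sum (fun j _ => fle j)).trans (sum_h k _ hR s)
  exact ⟨summable_of_sum_le f0 hsum, Real.tsum_le_of_sum_le f0 hsum⟩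

end SBE
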